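/- Suppose the sequence (f_i) satisfies d(s) = 0 for every s ∈ (0,∞), where d(s) := lim_{n→∞} h_n(θ, h_0(s))/h_n(θ, s). Then for every s ∈ (0,∞), the interval [h_0(s), s] contains at least one point s_r that is regular for the shifted sequence (f_{1+i})_{i≥0}. -/

import Mathlib

open MeasureTheory Filter Topology Set
open scoped ENNReal

noncomputable section

/-- `f` is the probability generating function `f(x) = ∑_{j≥1} p_j x^j` of a probability
distribution on the positive integers with `p 1 ≠ 1`. -/
def IsPGF (f : ℝ → ℝ) : Prop :=
  ∃ p : ℕ → ℝ, (∀ j, 0 ≤ p j) ∧ p 0 = 0 ∧ p 1 ≠ 1 ∧ HasSum p 1 ∧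
    ∀ x ∈ Set.Icc (0 : ℝ) 1, HasSum (fun j => p j * x ^ j) (f x)

/-- `g` is the inverse of `f` on `[0,1]`. -/
def IsInvOn01 (g f : ℝ → ℝ) : Prop :=
  ∀ x ∈ Set.Icc (0 : ℝ) 1, g (f x) = x ∧ f (g x) = x ∧ g x ∈ Set.Icc (0 : ℝ) 1

/-- `h(s) = -log f⁻¹(e^{-s})`, expressed through the inverse `g = f⁻¹`. -/
def hfun (g : ℝ → ℝ) (s : ℝ) : ℝ := - Real.log (g (Real.exp (-s)))

/-- `h_n(s) = h_{n-1}(⋯(h_0(s))⋯)`, built from the sequence `g i = f_i⁻¹` of inverses. -/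
def hIter (g : ℕ → ℝ → ℝ) : ℕ → ℝ → ℝ
  | 0, s => s
  | n + 1, s => hfun (g (n : ℕ)) (hIter g n s)

/-- `(Z n)` is a branching process in the fixed environment given by the pgfs `f n`:
`Z 0 = 1`, each `Z n` is a positive-integer valued `F n`-measurable variable, and
`E[t ^ Z (n+1) | F n] = (f n t) ^ Z n` a.s. for every `t ∈ [0,1]`. -/
def IsBranchingProcess {Ω : Type*} {mΩ : MeasurableSpace Ω} (μ : Measure Ω)
    (F : Filtration ℕ mΩ) (f : ℕ → ℝ → ℝ) (Z : ℕ → Ω → ℕ) : Prop :=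
  (∀ ω, Z 0 ω = 1) ∧ (∀ n ω, 1 ≤ Z n ω) ∧ (∀ n, Measurable[F n] (Z n)) ∧
    ∀ n, ∀ t ∈ Set.Icc (0 : ℝ) 1,
      (μ[fun ω => t ^ Z (n + 1) ω | F n]) =ᵐ[μ] fun ω => f n t ^ Z n ω

/-- `exp(-w)` for `w ∈ [0,∞]`, with the convention `exp(-∞) = 0`. -/
def expNeg (w : ℝ≥0∞) : ℝ := if w = ∞ then 0 else Real.exp (-w.toReal)

/-- `s ∈ (0,∞)` is a regular point (analytic definition):
`h_n(t)/h_n(s) → 0` for every `0 < t < s`. -/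
def AnalyticRegular (g : ℕ → ℝ → ℝ) (s : ℝ) : Prop :=
  ∀ t, 0 < t → t < s → Tendsto (fun n => hIter g n t / hIter g n s) atTop (𝓝 0)

/-- `U` is slowly varying at infinity. -/
def SlowlyVarying (U : ℝ → ℝ) : Prop :=
  ∀ lam : ℝ, 0 < lam → Tendsto (fun x => U (lam * x) / U x) atTop (𝓝 1)

/-- Generalized inverse `V(x) = inf{y ≥ 0 : U(y) ≥ x}`. -/
def Vfun (U : ℝ → ℝ) (x : ℝ) : ℝ := sInf {y : ℝ | 0 ≤ y ∧ x ≤ U y}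

/-- Generalized inverse `G(x) = inf{y ≥ 0 : F(y) ≥ x}` of a distribution function. -/
def Gfun (F : ℝ → ℝ) (x : ℝ) : ℝ := sInf {y : ℝ | 0 ≤ y ∧ x ≤ F y}

/-- `Q(x) = f'(x)(1-x)/(1-f(x))`. -/
def Qfun (f : ℝ → ℝ) (x : ℝ) : ℝ := deriv f x * (1 - x) / (1 - f x)

/-- Iterated inverse `f_n^{(-1)} = f_{n-1}^{(-1)} ∘ ⋯ ∘ f_0^{(-1)}`, the inverse of the
composition `f_n = f_0 ∘ f_1 ∘ ⋯ ∘ f_{n-1}`, built from the inverses `g i = f_i⁻¹`. -/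
def fCompInv (g : ℕ → ℝ → ℝ) : ℕ → ℝ → ℝ
  | 0, t => t
  | n + 1, t => g n (fCompInv g n t)

/-!
Every composition `F = f_0 ∘ ⋯ ∘ f_{n-1}` is a mixture of monomials, and
`F (exp (-h_n s)) = exp (-s)`. Two properties of such mixtures drive the proof.

* Jensen's inequality `F (y ^ l) ≤ F y ^ l` makes `h_n u / h_n t` decreasing in `n` for `u ≤ t`.
  So if it does not tend to zero, then `h_n t ≤ m * h_n u` for some `m` and all `n`.
* If `h_n t ≤ m * h_n u` with `u < t`, then `F` drops from `exp (-u)` to `exp (-t)` as its argument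
  `exp (-x)` moves through a bounded range of scales of `x`. A mixture of monomials with such a drop
  must also drop by a definite amount, independent of `F`, from `exp (-h_n t)` to
  `exp (-2 * h_n t)`. Hence `h_n r ≤ 2 * h_n t` for some `r > t` independent of `n`.

If `h_n a / h_n s → 0`, let `c` be the supremum of the `v ∈ [a, s]` with `h_n v / h_n s → 0`. Were
`c` not regular, some `u < c` would satisfy `h_n c ≤ m * h_n u`, and the second property would
provide `r > c` with `h_n r ≤ 2 * m * h_n u`, so that `h_n r / h_n s → 0` beyond the supremum.
-/

open Asymptotics

theorem hasSum_mul_rpow_le_rpow {ι : Type*} {w a : ι → ℝ} {A B l : ℝ} (hw : ∀ i, 0 ≤ w i)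
    (hw_sum : HasSum w 1) (ha : ∀ i, 0 ≤ a i) (hA : 0 < A) (hl : l ∈ Icc (0 : ℝ) 1)
    (haA : HasSum (fun i => w i * a i) A) (hB : HasSum (fun i => w i * a i ^ l) B) :
    B ≤ A ^ l := by
  have tangent_le (i : ι) : a i ^ l ≤ A ^ l * ((1 - l) + l / A * a i) := by
    have bernoulli := rpow_one_add_le_one_add_mul_self (s := a i / A - 1) (p := l)
      (by linarith [div_nonneg (ha i) hA.le]) hl.1 hl.2
    rw [add_sub_cancel, Real.div_rpow (ha i) hA.le, div_le_iff₀' (Real.rpow_pos_of_pos hA l)]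
      at bernoulli
    calc a i ^ l ≤ A ^ l * (1 + l * (a i / A - 1)) := bernoulli
      _ = A ^ l * ((1 - l) + l / A * a i) := by ring
  have tangent_sum : HasSum (fun i => A ^ l * ((1 - l) * w i + l / A * (w i * a i)))
      (A ^ l * ((1 - l) * 1 + l / A * A)) :=
    ((hw_sum.mul_left _).add (haA.mul_left _)).mul_left _
  calc B ≤ A ^ l * ((1 - l) * 1 + l / A * A) :=
        hasSum_le (fun i => (mul_le_mul_of_nonneg_left (tangent_le i) (hw i)).trans_eq (by ring))
          hB tangent_sum
    _ = A ^ l := by field_simp; ring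

theorem pow_mul_sub_le_of_pow_le {η v q : ℝ} {m : ℕ} (hη : 0 ≤ η) (hv : v ∈ Icc (0 : ℝ) 1)
    (hq : q ∈ Icc (0 : ℝ) 1) (hvq : v ^ m ≤ q) :
    η ^ m * (v - q) ≤ η ^ m * η + (q - q ^ 2) := by
  have hηm : 0 ≤ η ^ m := pow_nonneg hη m
  have hqq : 0 ≤ q - q ^ 2 := by nlinarith [hq.1, hq.2]
  rcases le_total v η with hvη | hηv
  · calc η ^ m * (v - q) ≤ η ^ m * η := by gcongr; linarith [hq.1]
      _ ≤ η ^ m * η + (q - q ^ 2) := le_add_of_nonneg_right hqq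
  · have hηq : η ^ m ≤ q := (pow_le_pow_left₀ hη hηv m).trans hvq
    calc η ^ m * (v - q) ≤ η ^ m * (1 - q) := by gcongr; exact hv.2
      _ ≤ q * (1 - q) := mul_le_mul_of_nonneg_right hηq (sub_nonneg.2 hq.2)
      _ = q - q ^ 2 := by ring
      _ ≤ η ^ m * η + (q - q ^ 2) := le_add_of_nonneg_left (mul_nonneg hηm hη)

theorem tendsto_zero_or_exists_pos_le_of_antitone {a : ℕ → ℝ} (ha : Antitone a)
    (ha_nonneg : ∀ n, 0 ≤ a n) : Tendsto a atTop (𝓝 0) ∨ ∃ δ > 0, ∀ n, δ ≤ a n := by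
  have hbdd : BddBelow (range a) := ⟨0, forall_mem_range.2 ha_nonneg⟩
  rcases (le_ciInf ha_nonneg).eq_or_lt with hzero | hpos
  · exact .inl (hzero ▸ tendsto_atTop_ciInf ha hbdd)
  · exact .inr ⟨⨅ n, a n, hpos, ciInf_le hbdd⟩

theorem exp_neg_mem_Ioo {x : ℝ} (hx : 0 < x) : Real.exp (-x) ∈ Ioo (0 : ℝ) 1 :=
  ⟨Real.exp_pos _, Real.exp_lt_one_iff.2 (neg_lt_zero.2 hx)⟩

theorem exp_neg_mem_Icc {x : ℝ} (hx : 0 < x) : Real.exp (-x) ∈ Icc (0 : ℝ) 1 :=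
  Ioo_subset_Icc_self (exp_neg_mem_Ioo hx)

/-- `F` is, on `[0,1]`, a convex combination of monomials `x ^ e i`, that is, a probability
generating function whose exponents may repeat and may vanish. Allowing an arbitrary index type
makes closure under composition immediate; that the weights sum to one is encoded as `F 1 = 1`. -/
def IsMonomialMixture (F : ℝ → ℝ) : Prop :=
  F 1 = 1 ∧ ∃ (ι : Type) (w : ι → ℝ) (e : ι → ℕ), (∀ i, 0 ≤ w i) ∧
    ∀ x ∈ Icc (0 : ℝ) 1, HasSum (fun i => w i * x ^ e i) (F x)

theorem IsPGF.isMonomialMixture {f : ℝ → ℝ} (hf : IsPGF f) : IsMonomialMixture f := by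
  obtain ⟨p, hp, -, -, hp_sum, hfp⟩ := hf
  have hf_one : HasSum p (f 1) := by simpa using hfp 1 (right_mem_Icc.2 zero_le_one)
  exact ⟨hf_one.unique hp_sum, ℕ, p, id, hp, hfp⟩

theorem isMonomialMixture_pow (k : ℕ) : IsMonomialMixture fun x => x ^ k :=
  ⟨one_pow k, Unit, fun _ => 1, fun _ => k, fun _ => zero_le_one, fun x _ => by simp⟩

namespace IsMonomialMixture

variable {F G : ℝ → ℝ}

theorem mul (hF : IsMonomialMixture F) (hG : IsMonomialMixture G) :
    IsMonomialMixture fun x => F x * G x := by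
  obtain ⟨hF_one, ι, w, e, hw, hFw⟩ := hF
  obtain ⟨hG_one, κ, v, d, hv, hGv⟩ := hG
  refine ⟨by simp only [hF_one, hG_one, mul_one], ι × κ, fun q => w q.1 * v q.2,
    fun q => e q.1 + d q.2, fun q => mul_nonneg (hw _) (hv _), fun x hx => ?_⟩
  have hsummable := (hFw x hx).summable.mul_of_nonneg (hGv x hx).summable
    (fun i => mul_nonneg (hw i) (pow_nonneg hx.1 _))
    (fun k => mul_nonneg (hv k) (pow_nonneg hx.1 _))
  exact ((hFw x hx).mul (hGv x hx) hsummable).congr_fun fun q => by rw [pow_add]; ring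

theorem pow (hF : IsMonomialMixture F) (n : ℕ) : IsMonomialMixture fun x => F x ^ n := by
  induction n with
  | zero => simpa only [pow_zero] using isMonomialMixture_pow 0
  | succ n ih => simpa only [pow_succ] using ih.mul hF

theorem monotoneOn (hF : IsMonomialMixture F) : MonotoneOn F (Icc 0 1) := by
  obtain ⟨-, ι, w, e, hw, hFw⟩ := hF
  exact fun x hx y hy hxy =>
    hasSum_le (fun i => mul_le_mul_of_nonneg_left (pow_le_pow_left₀ hx.1 hxy _) (hw i))
      (hFw x hx) (hFw y hy)

theorem mapsTo (hF : IsMonomialMixture F) : MapsTo F (Icc 0 1) (Icc 0 1) := by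
  intro x hx
  have hF_le : F x ≤ F 1 := hF.monotoneOn hx (right_mem_Icc.2 zero_le_one) hx.2
  obtain ⟨hF_one, ι, w, e, hw, hFw⟩ := hF
  exact ⟨(hFw x hx).nonneg fun i => mul_nonneg (hw i) (pow_nonneg hx.1 _), hF_one ▸ hF_le⟩

theorem comp (hF : IsMonomialMixture F) (hG : IsMonomialMixture G) :
    IsMonomialMixture (F ∘ G) := by
  have hG_mapsTo := hG.mapsTo
  obtain ⟨hF_one, ι, w, e, hw, hFw⟩ := hF
  choose κ v d hv hGv using fun i => (hG.pow (e i)).2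
  refine ⟨by rw [Function.comp_apply, hG.1, hF_one], Σ i, κ i, fun q => w q.1 * v q.1 q.2,
    fun q => d q.1 q.2, fun q => mul_nonneg (hw _) (hv _ _), fun x hx => ?_⟩
  have inner_sum (i : ι) : HasSum (fun k => w i * v i k * x ^ d i k) (w i * G x ^ e i) := by
    simpa only [mul_assoc] using (hGv i x hx).mul_left (w i)
  have outer_sum := hFw (G x) (hG_mapsTo hx)
  refine outer_sum.sigma_of_hasSum inner_sum ((summable_sigma_of_nonneg fun q =>
    mul_nonneg (mul_nonneg (hw _) (hv _ _)) (pow_nonneg hx.1 _)).2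
      ⟨fun i => (inner_sum i).summable, ?_⟩)
  simpa only [(inner_sum _).tsum_eq] using outer_sum.summable

theorem map_rpow_le_rpow_map (hF : IsMonomialMixture F) {y l : ℝ} (hy : y ∈ Icc (0 : ℝ) 1)
    (hFy : 0 < F y) (hl : l ∈ Icc (0 : ℝ) 1) : F (y ^ l) ≤ F y ^ l := by
  obtain ⟨hF_one, ι, w, e, hw, hFw⟩ := hF
  have hw_sum : HasSum w 1 := by simpa [hF_one] using hFw 1 (right_mem_Icc.2 zero_le_one)
  have hyl : y ^ l ∈ Icc (0 : ℝ) 1 :=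
    ⟨Real.rpow_nonneg hy.1 l, Real.rpow_le_one hy.1 hy.2 hl.1⟩
  refine hasSum_mul_rpow_le_rpow hw hw_sum (fun i => pow_nonneg hy.1 (e i)) hFy hl (hFw y hy) ?_
  simpa only [Real.rpow_pow_comm hy.1] using hFw (y ^ l) hyl

theorem pow_mul_sub_le (hF : IsMonomialMixture F) {η p q : ℝ} {m : ℕ} (hη : 0 ≤ η)
    (hp : p ∈ Icc (0 : ℝ) 1) (hq : q ∈ Icc (0 : ℝ) 1) (hpq : p ^ m ≤ q) :
    η ^ m * (F p - F q) ≤ η ^ m * η + (F q - F (q ^ 2)) := by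
  obtain ⟨hF_one, ι, w, e, hw, hFw⟩ := hF
  have hw_sum : HasSum w 1 := by simpa [hF_one] using hFw 1 (right_mem_Icc.2 zero_le_one)
  have pow_mem {x : ℝ} (hx : x ∈ Icc (0 : ℝ) 1) (k : ℕ) : x ^ k ∈ Icc (0 : ℝ) 1 :=
    ⟨pow_nonneg hx.1 k, pow_le_one₀ hx.1 hx.2⟩
  have lhs_sum := ((hFw p hp).sub (hFw q hq)).mul_left (η ^ m)
  have rhs_sum := (hw_sum.mul_left (η ^ m * η)).add ((hFw q hq).sub (hFw _ (pow_mem hq 2)))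
  rw [mul_one] at rhs_sum
  refine hasSum_le (fun i => ?_) lhs_sum rhs_sum
  have hpq_pow : (p ^ e i) ^ m ≤ q ^ e i := by
    rw [pow_right_comm]
    exact pow_le_pow_left₀ (pow_nonneg hp.1 m) hpq _
  calc η ^ m * (w i * p ^ e i - w i * q ^ e i)
      = w i * (η ^ m * (p ^ e i - q ^ e i)) := by ring
    _ ≤ w i * (η ^ m * η + (q ^ e i - (q ^ e i) ^ 2)) :=
        mul_le_mul_of_nonneg_left
          (pow_mul_sub_le_of_pow_le hη (pow_mem hp _) (pow_mem hq _) hpq_pow) (hw i)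
    _ = η ^ m * η * w i + (w i * q ^ e i - w i * (q ^ 2) ^ e i) := by
        rw [pow_right_comm q 2]; ring

theorem lt_of_map_exp_neg_lt (hF : IsMonomialMixture F) {x y : ℝ} (hx : 0 < x) (hy : 0 < y)
    (h : F (Real.exp (-x)) < F (Real.exp (-y))) : y < x := by
  simpa using hF.monotoneOn.reflect_lt (exp_neg_mem_Icc hx) (exp_neg_mem_Icc hy) h

end IsMonomialMixture

theorem exists_gt_forall_isMonomialMixture_le_two_mul {u t : ℝ} (hut : u < t) (m : ℕ) :
    ∃ r > t, ∀ F, IsMonomialMixture F → ∀ x y z : ℝ, 0 < x → 0 < y → 0 < z →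
      F (Real.exp (-x)) = Real.exp (-u) → F (Real.exp (-y)) = Real.exp (-t) →
      F (Real.exp (-z)) = Real.exp (-r) → y ≤ m * x → z ≤ 2 * y := by
  obtain ⟨η, hη⟩ : ∃ η, 2 * η = Real.exp (-u) - Real.exp (-t) := ⟨_, mul_div_cancel₀ _ two_ne_zero⟩
  have hη_pos : 0 < η := by linarith [Real.exp_lt_exp.2 (neg_lt_neg hut)]
  obtain ⟨r, hr, htr⟩ : ∃ r, Real.exp (-t) - η ^ m * η < Real.exp (-r) ∧ t < r := by
    have hcont : Tendsto (fun r => Real.exp (-r)) (𝓝[>] t) (𝓝 (Real.exp (-t))) :=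
      (Real.continuous_exp.comp continuous_neg).continuousWithinAt
    have hlt : Real.exp (-t) - η ^ m * η < Real.exp (-t) := sub_lt_self _ (by positivity)
    exact ((hcont.eventually_const_lt hlt).and self_mem_nhdsWithin).exists
  refine ⟨r, htr, fun F hF x y z hx hy hz hFx hFy hFz hyx => ?_⟩
  have hxy : Real.exp (-x) ^ m ≤ Real.exp (-y) := by
    rw [← Real.exp_nat_mul, Real.exp_le_exp]
    linarith
  have hdouble : Real.exp (-y) ^ 2 = Real.exp (-(2 * y)) := by
    rw [← Real.exp_nat_mul]
    push_cast
    ring_nf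
  have hdrop := hF.pow_mul_sub_le hη_pos.le (exp_neg_mem_Icc hx) (exp_neg_mem_Icc hy) hxy
  rw [hdouble, hFx, hFy, ← hη] at hdrop
  exact (hF.lt_of_map_exp_neg_lt (mul_pos two_pos hy) hz (by linarith)).le

section SingleFunction

variable {f g : ℝ → ℝ}

theorem IsInvOn01.strictMonoOn (hg : IsInvOn01 g f) (hf : IsMonomialMixture f) :
    StrictMonoOn f (Icc 0 1) :=
  hf.monotoneOn.strictMonoOn_of_injOn
    (LeftInvOn.injOn fun x hx => (hg x hx).1 : InjOn f (Icc 0 1))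

theorem IsInvOn01.mapsTo_Ioo (hg : IsInvOn01 g f) (hf : IsMonomialMixture f) :
    MapsTo g (Ioo 0 1) (Ioo 0 1) := by
  intro x hx
  have zero_mem : (0 : ℝ) ∈ Icc (0 : ℝ) 1 := left_mem_Icc.2 zero_le_one
  have hf_zero : f 0 ≤ 0 := by
    obtain ⟨-, hfg_zero, hg_zero⟩ := hg 0 zero_mem
    exact (hf.monotoneOn zero_mem hg_zero hg_zero.1).trans_eq hfg_zero
  obtain ⟨-, hfg, hgx⟩ := hg x (Ioo_subset_Icc_self hx)
  have hg_ne_zero : g x ≠ 0 := fun h => by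
    rw [h] at hfg
    exact (hf_zero.trans_lt hx.1).ne hfg
  have hg_ne_one : g x ≠ 1 := fun h => by
    rw [h, hf.1] at hfg
    exact hx.2.ne' hfg
  exact ⟨hgx.1.lt_of_ne' hg_ne_zero, hgx.2.lt_of_ne hg_ne_one⟩

theorem hfun_pos (hf : IsMonomialMixture f) (hg : IsInvOn01 g f) {s : ℝ} (hs : 0 < s) :
    0 < hfun g s := by
  obtain ⟨hg_pos, hg_lt_one⟩ := hg.mapsTo_Ioo hf (exp_neg_mem_Ioo hs)
  exact neg_pos.2 (Real.log_neg hg_pos hg_lt_one)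

theorem map_exp_neg_hfun (hf : IsMonomialMixture f) (hg : IsInvOn01 g f) {s : ℝ} (hs : 0 < s) :
    f (Real.exp (-hfun g s)) = Real.exp (-s) := by
  rw [hfun, neg_neg, Real.exp_log (hg.mapsTo_Ioo hf (exp_neg_mem_Ioo hs)).1]
  exact (hg _ (exp_neg_mem_Icc hs)).2.1

theorem strictMonoOn_hfun (hf : IsMonomialMixture f) (hg : IsInvOn01 g f) :
    StrictMonoOn (hfun g) (Ioi 0) := by
  intro s hs t ht hst
  refine hf.lt_of_map_exp_neg_lt (hfun_pos hf hg ht) (hfun_pos hf hg hs) ?_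
  rw [map_exp_neg_hfun hf hg hs, map_exp_neg_hfun hf hg ht]
  exact Real.exp_lt_exp.2 (neg_lt_neg hst)

theorem hfun_mul_le_mul_hfun (hf : IsMonomialMixture f) (hg : IsInvOn01 g f) {l t : ℝ}
    (hl : l ∈ Ioc (0 : ℝ) 1) (ht : 0 < t) : hfun g (l * t) ≤ l * hfun g t := by
  have hlt : 0 < l * t := mul_pos hl.1 ht
  have hlh : 0 < l * hfun g t := mul_pos hl.1 (hfun_pos hf hg ht)
  have exp_neg_mul (x : ℝ) : Real.exp (-(l * x)) = Real.exp (-x) ^ l := by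
    rw [← Real.exp_mul]
    ring_nf
  have jensen : f (Real.exp (-(l * hfun g t))) ≤ f (Real.exp (-hfun g (l * t))) := by
    have hft : f (Real.exp (-hfun g t)) = Real.exp (-t) := map_exp_neg_hfun hf hg ht
    calc f (Real.exp (-(l * hfun g t)))
        = f (Real.exp (-hfun g t) ^ l) := by rw [exp_neg_mul]
      _ ≤ f (Real.exp (-hfun g t)) ^ l :=
          hf.map_rpow_le_rpow_map (exp_neg_mem_Icc (hfun_pos hf hg ht)) (hft ▸ Real.exp_pos _)
            (Ioc_subset_Icc_self hl)
      _ = f (Real.exp (-hfun g (l * t))) := by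
          rw [hft, ← exp_neg_mul, map_exp_neg_hfun hf hg hlt]
  simpa using ((hg.strictMonoOn hf).le_iff_le (exp_neg_mem_Icc hlh)
    (exp_neg_mem_Icc (hfun_pos hf hg hlt))).1 jensen

end SingleFunction

/-- The composition `f_0 ∘ ⋯ ∘ f_{n-1}`, which `fCompInv` inverts; it is the one monomial mixture
from which all values `h_n(s)` are read off. -/
def fComp (f : ℕ → ℝ → ℝ) : ℕ → ℝ → ℝ
  | 0 => id
  | n + 1 => fComp f n ∘ f n

section Iteration

variable {f g : ℕ → ℝ → ℝ}

theorem isMonomialMixture_fComp (hf : ∀ i, IsMonomialMixture (f i)) (n : ℕ) :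
    IsMonomialMixture (fComp f n) := by
  induction n with
  | zero => simpa only [pow_one, fComp] using! isMonomialMixture_pow 1
  | succ n ih => exact ih.comp (hf n)

theorem hIter_pos (hf : ∀ i, IsMonomialMixture (f i)) (hg : ∀ i, IsInvOn01 (g i) (f i))
    {s : ℝ} (hs : 0 < s) (n : ℕ) : 0 < hIter g n s := by
  induction n with
  | zero => exact hs
  | succ n ih => exact hfun_pos (hf n) (hg n) ih

theorem fComp_exp_neg_hIter (hf : ∀ i, IsMonomialMixture (f i)) (hg : ∀ i, IsInvOn01 (g i) (f i))
    {s : ℝ} (hs : 0 < s) (n : ℕ) : fComp f n (Real.exp (-hIter g n s)) = Real.exp (-s) := by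
  induction n with
  | zero => rfl
  | succ n ih =>
    rw [fComp, hIter, Function.comp_apply,
      map_exp_neg_hfun (hf n) (hg n) (hIter_pos hf hg hs n), ih]

theorem monotoneOn_hIter (hf : ∀ i, IsMonomialMixture (f i)) (hg : ∀ i, IsInvOn01 (g i) (f i))
    (n : ℕ) : MonotoneOn (hIter g n) (Ioi 0) := by
  induction n with
  | zero => exact monotoneOn_id
  | succ n ih =>
    exact (strictMonoOn_hfun (hf n) (hg n)).monotoneOn.comp ih fun s hs => hIter_pos hf hg hs n

theorem antitone_hIter_div_hIter (hf : ∀ i, IsMonomialMixture (f i))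
    (hg : ∀ i, IsInvOn01 (g i) (f i)) {u t : ℝ} (hu : 0 < u) (hut : u ≤ t) :
    Antitone fun n => hIter g n u / hIter g n t := by
  refine antitone_nat_of_succ_le fun n => ?_
  have ht : 0 < t := hu.trans_le hut
  have hu_pos := hIter_pos hf hg hu n
  have ht_pos := hIter_pos hf hg ht n
  have hle : hIter g n u ≤ hIter g n t := monotoneOn_hIter hf hg n hu ht hut
  have hstar := hfun_mul_le_mul_hfun (hf n) (hg n)
    ⟨div_pos hu_pos ht_pos, (div_le_one ht_pos).2 hle⟩ ht_pos
  rw [div_mul_cancel₀ _ ht_pos.ne'] at hstar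
  exact (div_le_iff₀ (hIter_pos hf hg ht (n + 1))).2 hstar

theorem isLittleO_hIter_iff (hf : ∀ i, IsMonomialMixture (f i)) (hg : ∀ i, IsInvOn01 (g i) (f i))
    {u s : ℝ} (hs : 0 < s) :
    (fun n => hIter g n u) =o[atTop] (fun n => hIter g n s) ↔
      Tendsto (fun n => hIter g n u / hIter g n s) atTop (𝓝 0) :=
  isLittleO_iff_tendsto fun n hn => absurd hn (hIter_pos hf hg hs n).ne'

theorem isBigO_hIter_of_le_mul (hf : ∀ i, IsMonomialMixture (f i)) (hg : ∀ i, IsInvOn01 (g i) (f i))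
    {u t C : ℝ} (hu : 0 < u) (ht : 0 < t) (h : ∀ n, hIter g n t ≤ C * hIter g n u) :
    (fun n => hIter g n t) =O[atTop] (fun n => hIter g n u) :=
  .of_bound C <| .of_forall fun n => by
    simpa only [Real.norm_of_nonneg (hIter_pos hf hg hu n).le,
      Real.norm_of_nonneg (hIter_pos hf hg ht n).le] using h n

theorem isBigO_hIter_of_le (hf : ∀ i, IsMonomialMixture (f i)) (hg : ∀ i, IsInvOn01 (g i) (f i))
    {u t : ℝ} (hu : 0 < u) (hut : u ≤ t) :
    (fun n => hIter g n u) =O[atTop] (fun n => hIter g n t) :=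
  isBigO_hIter_of_le_mul hf hg (C := 1) (hu.trans_le hut) hu fun n => by
    simpa only [one_mul] using monotoneOn_hIter hf hg n hu (hu.trans_le hut) hut

theorem lt_of_isLittleO_hIter (hf : ∀ i, IsMonomialMixture (f i)) (hg : ∀ i, IsInvOn01 (g i) (f i))
    {u s : ℝ} (hs : 0 < s)
    (h : (fun n => hIter g n u) =o[atTop] (fun n => hIter g n s)) : u < s := by
  by_contra! hsu
  exact isLittleO_irrefl (Frequently.of_forall fun n => (hIter_pos hf hg hs n).ne')
    ((isBigO_hIter_of_le hf hg hs hsu).trans_isLittleO h)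

theorem isLittleO_hIter_or_exists_le_mul (hf : ∀ i, IsMonomialMixture (f i))
    (hg : ∀ i, IsInvOn01 (g i) (f i)) {u t : ℝ} (hu : 0 < u) (hut : u ≤ t) :
    (fun n => hIter g n u) =o[atTop] (fun n => hIter g n t) ∨
      ∃ m : ℕ, ∀ n, hIter g n t ≤ m * hIter g n u := by
  have ht : 0 < t := hu.trans_le hut
  refine (tendsto_zero_or_exists_pos_le_of_antitone (antitone_hIter_div_hIter hf hg hu hut)
    fun n => (div_pos (hIter_pos hf hg hu n) (hIter_pos hf hg ht n)).le).imp
    (isLittleO_hIter_iff hf hg ht).2 ?_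
  rintro ⟨δ, hδ, hδ_le⟩
  obtain ⟨m, hm⟩ := exists_nat_ge δ⁻¹
  refine ⟨m, fun n => ?_⟩
  calc hIter g n t ≤ δ⁻¹ * hIter g n u := by
        rw [← div_eq_inv_mul, le_div_iff₀' hδ]
        exact (le_div_iff₀ (hIter_pos hf hg ht n)).1 (hδ_le n)
    _ ≤ m * hIter g n u := mul_le_mul_of_nonneg_right hm (hIter_pos hf hg hu n).le

theorem exists_gt_hIter_le_two_mul (hf : ∀ i, IsMonomialMixture (f i))
    (hg : ∀ i, IsInvOn01 (g i) (f i)) {u t : ℝ} (hu : 0 < u) (hut : u < t) {m : ℕ}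
    (hm : ∀ n, hIter g n t ≤ m * hIter g n u) :
    ∃ r > t, ∀ n, hIter g n r ≤ 2 * hIter g n t := by
  have ht : 0 < t := hu.trans hut
  obtain ⟨r, htr, hr⟩ := exists_gt_forall_isMonomialMixture_le_two_mul hut m
  have hr_pos : 0 < r := ht.trans htr
  exact ⟨r, htr, fun n => hr _ (isMonomialMixture_fComp hf n) _ _ _ (hIter_pos hf hg hu n)
    (hIter_pos hf hg ht n) (hIter_pos hf hg hr_pos n) (fComp_exp_neg_hIter hf hg hu n)
    (fComp_exp_neg_hIter hf hg ht n) (fComp_exp_neg_hIter hf hg hr_pos n) (hm n)⟩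

theorem exists_gt_isBigO_hIter (hf : ∀ i, IsMonomialMixture (f i)) (hg : ∀ i, IsInvOn01 (g i) (f i))
    {u t : ℝ} (hu : 0 < u) (hut : u < t)
    (h : ¬(fun n => hIter g n u) =o[atTop] (fun n => hIter g n t)) :
    ∃ r > t, (fun n => hIter g n r) =O[atTop] (fun n => hIter g n u) := by
  have ht : 0 < t := hu.trans hut
  obtain ⟨m, hm⟩ := (isLittleO_hIter_or_exists_le_mul hf hg hu hut.le).resolve_left h
  obtain ⟨r, htr, hr⟩ := exists_gt_hIter_le_two_mul hf hg hu hut hm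
  exact ⟨r, htr, (isBigO_hIter_of_le_mul hf hg ht (ht.trans htr) hr).trans
    (isBigO_hIter_of_le_mul hf hg hu ht hm)⟩

theorem exists_regular_point_in_interval_general (hf : ∀ i, IsMonomialMixture (f i))
    (hg : ∀ i, IsInvOn01 (g i) (f i)) {a s : ℝ} (ha : 0 < a) (hs : 0 < s)
    (has : Tendsto (fun n => hIter g n a / hIter g n s) atTop (𝓝 0)) :
    ∃ sr ∈ Icc a s, AnalyticRegular g sr := by
  rw [← isLittleO_hIter_iff hf hg hs] at has
  let S : Set ℝ := {v ∈ Icc a s | (fun n => hIter g n v) =o[atTop] (fun n => hIter g n s)}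
  have haS : a ∈ S := ⟨left_mem_Icc.2 (lt_of_isLittleO_hIter hf hg hs has).le, has⟩
  have hS_bdd : BddAbove S := ⟨s, fun v hv => hv.1.2⟩
  have hac : a ≤ sSup S := le_csSup hS_bdd haS
  have hc : 0 < sSup S := ha.trans_le hac
  refine ⟨sSup S, ⟨hac, csSup_le ⟨a, haS⟩ fun v hv => hv.1.2⟩, fun u hu huc => ?_⟩
  rw [← isLittleO_hIter_iff hf hg hc]
  by_contra hu_not
  obtain ⟨r, hcr, hru⟩ := exists_gt_isBigO_hIter hf hg hu huc hu_not
  obtain ⟨v, hvS, huv⟩ := exists_lt_of_lt_csSup ⟨a, haS⟩ huc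
  have hrs : (fun n => hIter g n r) =o[atTop] (fun n => hIter g n s) :=
    (hru.trans (isBigO_hIter_of_le hf hg hu huv.le)).trans_isLittleO hvS.2
  have hrS : r ∈ S := ⟨⟨hac.trans hcr.le, (lt_of_isLittleO_hIter hf hg hs hrs).le⟩, hrs⟩
  exact (le_csSup hS_bdd hrS).not_gt hcr

end Iteration

/-- If `d(s) = lim_n h_n(θ, h_0(s))/h_n(θ, s) = 0` for every
`s ∈ (0,∞)`, then every interval `[h_0(s), s]` contains at least one point that is
regular for the shifted sequence `(f (1+i))`. -/
theorem exists_regular_point_in_interval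
    (f g : ℕ → ℝ → ℝ) (hf : ∀ i, IsPGF (f i)) (hg : ∀ i, IsInvOn01 (g i) (f i))
    (hd : ∀ s : ℝ, 0 < s →
      Tendsto (fun n => hIter (fun i => g (1 + i)) n (hfun (g 0) s)
        / hIter (fun i => g (1 + i)) n s) atTop (𝓝 0)) :
    ∀ s : ℝ, 0 < s → ∃ sr ∈ Set.Icc (hfun (g 0) s) s,
      AnalyticRegular (fun i => g (1 + i)) sr := by
  intro s hs
  exact exists_regular_point_in_interval_general (fun i => (hf (1 + i)).isMonomialMixture)
    (fun i => hg (1 + i)) (hfun_pos (hf 0).isMonomialMixture (hg 0) hs) hs (hd s hs)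

end
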